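/- Discretized submodularity: there is a constant A > 0, depending only on the dimensions of the Euclidean spaces involved, such that the following holds. Let X, Y, Z, W be random variables with bounded ranges in Euclidean spaces and let κ ≥ 2. Suppose X = f(Z) and X = g(W) for some κ-Lipschitz functions f, g, and Y = h(Z, W) for some κ-Lipschitz function h. Then for all n ∈ ℕ, Hₙ(X) + Hₙ(Y) ≤ Hₙ(Z) + Hₙ(W) + A·log κ. -/

import Mathlib

open MeasureTheory ProbabilityTheory Real

/-- The dyadic discretization map `D_n(x) = 2^{-n} ⌊2^n x⌋`. -/
noncomputable def Dn (n : ℕ) (x : ℝ) : ℝ := (⌊(2 : ℝ) ^ n * x⌋ : ℝ) / (2 : ℝ) ^ n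

/-- Shannon entropy (base 2) of the discrete random variable `f` under `P`. -/
noncomputable def entOf {Ω : Type*} [MeasurableSpace Ω] {S : Type*}
    (P : Measure Ω) (f : Ω → S) : ℝ :=
  ∑' s : S, -((P (f ⁻¹' {s})).toReal * Real.logb 2 (P (f ⁻¹' {s})).toReal)

/-- `H_n(X)` for a random variable with values in `ℝ^d`: entropy of the componentwise
discretization `D_n(X)`. -/
noncomputable def HnV {Ω : Type*} [MeasurableSpace Ω] {d : ℕ} (P : Measure Ω) (n : ℕ)
    (X : Ω → EuclideanSpace ℝ (Fin d)) : ℝ :=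
  entOf P (fun ω => (fun i : Fin d => Dn n (X ω i)))

/-- `f` is κ-Lipschitz on the set `D`. -/
def LipOn {E F : Type*} [PseudoMetricSpace E] [PseudoMetricSpace F]
    (f : E → F) (D : Set E) (κ : ℝ) : Prop :=
  ∀ x ∈ D, ∀ y ∈ D, dist (f x) (f y) ≤ κ * dist x y

/-! A cell of `D_n` has diameter `O(2⁻ⁿ)`, so once `D_n(Z)` is known, `X = f(Z)` is confined to a
ball of radius `O(κ 2⁻ⁿ)`, which meets `O(κ)^d` cells. Hence the conditional entropy of `D_n(X)`
given `D_n(Z)` is `O(log κ)`; likewise for `D_n(X)` given `D_n(W)` and for `D_n(Y)` given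
`(D_n(Z), D_n(W))`. It remains to combine these three bounds with Shannon's submodularity
`H(Z, W, X) + H(X) ≤ H(Z, X) + H(W, X)`.

Both entropy inequalities are instances of Gibbs' inequality `∑ p log (q / p) ≤ log ∑ q`, where `p`
is the joint law. For submodularity, `q` makes `Z` and `W` conditionally independent given `X`;
for the conditional entropy of `b` given `a`, `q(s, t) = P(a = s)`. -/

section Entropy

open scoped Finset

variable {Ω α β γ : Type*} [MeasurableSpace Ω]

lemma card_filter_range_pair_le_ncard [DecidableEq α] (a : SimpleFunc Ω α) (b : SimpleFunc Ω β)
    (s : α) : #{u ∈ (a.pair b).range | u.1 = s} ≤ (b '' (a ⁻¹' {s})).ncard := by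
  have filter_subset : {u | u ∈ (a.pair b).range ∧ u.1 = s} ⊆
      Prod.mk s '' (b '' (a ⁻¹' {s})) := by
    rintro u ⟨hu, rfl⟩
    obtain ⟨ω, rfl⟩ := SimpleFunc.mem_range.1 hu
    exact ⟨b ω, ⟨ω, rfl, rfl⟩, rfl⟩
  have image_finite : (b '' (a ⁻¹' {s})).Finite :=
    b.finite_range.subset (Set.image_subset_range ..)
  rw [← Set.ncard_coe_finset, Finset.coe_filter]
  exact (Set.ncard_le_ncard filter_subset (image_finite.image _)).trans
    (Set.ncard_image_le image_finite)

lemma mul_neg_logb_two_le {p q M : ℝ} (hp : 0 ≤ p) (hq : 0 ≤ q) (hpq : 0 < p → 0 < q)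
    (hM : 0 < M) :
    p * -logb 2 p ≤ p * -logb 2 q + p * logb 2 M + (q / M - p) / log 2 := by
  have log_two_pos : 0 < log 2 := log_pos one_lt_two
  rcases hp.eq_or_lt with rfl | p_pos
  · simp only [zero_mul, zero_add, sub_zero]
    positivity
  have q_pos := hpq p_pos
  have mul_log_le : p * log (q / (M * p)) ≤ q / M - p := by
    calc p * log (q / (M * p)) ≤ p * (q / (M * p) - 1) := by
          gcongr
          exact log_le_sub_one_of_pos (by positivity)
      _ = q / M - p := by field_simp
  rw [log_div q_pos.ne' (by positivity), log_mul hM.ne' p_pos.ne'] at mul_log_le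
  simp only [logb]
  linear_combination div_le_div_of_nonneg_right mul_log_le log_two_pos.le

variable (P : Measure Ω)

/-- The self-information `-log₂ P(a = a(ω))` of a discrete random variable `a`; its expectation is
the entropy of `a`. -/
noncomputable def surprisal (a : Ω → α) (ω : Ω) : ℝ := -logb 2 (P.real (a ⁻¹' {a ω}))

/-- The probability of the outcome `((s, r), t)` under the law for which `z` and `w` are
conditionally independent given `x`, with the joint laws of `(z, x)` and `(w, x)` unchanged. It is
`0` when `P(x = t) = 0`. -/
noncomputable def condIndepProb (z : Ω → α) (w : Ω → β) (x : Ω → γ) (u : (α × β) × γ) : ℝ :=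
  P.real ((fun ω ↦ (z ω, x ω)) ⁻¹' {(u.1.1, u.2)}) *
    P.real ((fun ω ↦ (w ω, x ω)) ⁻¹' {(u.1.2, u.2)}) / P.real (x ⁻¹' {u.2})

lemma condIndepProb_nonneg (z : Ω → α) (w : Ω → β) (x : Ω → γ) (u : (α × β) × γ) :
    0 ≤ condIndepProb P z w x u := by
  unfold condIndepProb
  positivity

section FiniteMeasure

variable [IsFiniteMeasure P]

lemma integrable_comp_simpleFunc (a : SimpleFunc Ω α) (F : α → ℝ) :
    Integrable (fun ω ↦ F (a ω)) P :=
  (a.map F).integrable_of_isFiniteMeasure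

lemma integral_comp_simpleFunc (a : SimpleFunc Ω α) (F : α → ℝ) :
    ∫ ω, F (a ω) ∂P = ∑ s ∈ a.range, P.real (a ⁻¹' {s}) * F s := by
  classical
  have eq_sum_indicator : (fun ω ↦ F (a ω)) =
      fun ω ↦ ∑ s ∈ a.range, (a ⁻¹' {s}).indicator (fun _ ↦ F s) ω := by
    ext ω
    simp [Set.indicator_apply]
  rw [eq_sum_indicator, integral_finsetSum _ fun s _ ↦
    (integrable_const (F s)).indicator (a.measurableSet_fiber s)]
  simp only [integral_indicator_const _ (a.measurableSet_fiber _), smul_eq_mul]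

lemma sum_measureReal_fiber (a : SimpleFunc Ω α) :
    ∑ s ∈ a.range, P.real (a ⁻¹' {s}) = P.real Set.univ := by
  rw [sum_measureReal_preimage_singleton _ fun s _ ↦ a.measurableSet_fiber s]
  simp

lemma sum_measureReal_fiber_pair (a : SimpleFunc Ω α) (b : SimpleFunc Ω β) (t : β) :
    ∑ s ∈ a.range, P.real (a.pair b ⁻¹' {(s, t)}) = P.real (b ⁻¹' {t}) := by
  simpa [SimpleFunc.pair_preimage_singleton, measureReal_restrict_apply, a.measurableSet_fiber]
    using sum_measureReal_fiber (P.restrict (b ⁻¹' {t})) a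

lemma ae_measureReal_fiber_pos (a : SimpleFunc Ω α) : ∀ᵐ ω ∂P, 0 < P.real (a ⁻¹' {a ω}) := by
  have ae_of_eq : ∀ᵐ ω ∂P, ∀ s ∈ a.range, a ω = s → 0 < P.real (a ⁻¹' {s}) := by
    refine (Finset.eventually_all _).2 fun s _ ↦ ?_
    rcases measureReal_nonneg.eq_or_lt with null | pos
    · have fiber_null : P (a ⁻¹' {s}) = 0 :=
        (measureReal_eq_zero_iff (measure_ne_top P _)).1 null.symm
      filter_upwards [measure_eq_zero_iff_ae_notMem.1 fiber_null] with ω hω h using absurd h hω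
    · exact .of_forall fun _ _ ↦ pos
  filter_upwards [ae_of_eq] with ω hω using hω _ (a.mem_range_self ω) rfl

lemma integrable_surprisal (a : SimpleFunc Ω α) : Integrable (surprisal P a) P :=
  integrable_comp_simpleFunc P a fun s ↦ -logb 2 (P.real (a ⁻¹' {s}))

lemma integral_surprisal_eq_sum (a : SimpleFunc Ω α) :
    ∫ ω, surprisal P a ω ∂P = ∑ s ∈ a.range, P.real (a ⁻¹' {s}) * -logb 2 (P.real (a ⁻¹' {s})) :=
  integral_comp_simpleFunc P a fun s ↦ -logb 2 (P.real (a ⁻¹' {s}))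

lemma entOf_eq_integral_surprisal (a : SimpleFunc Ω α) : entOf P a = ∫ ω, surprisal P a ω ∂P := by
  rw [integral_surprisal_eq_sum]
  simp only [entOf, ← measureReal_def, mul_neg]
  refine tsum_eq_sum fun s hs ↦ ?_
  have fiber_empty : a ⁻¹' {s} = ∅ :=
    (SimpleFunc.preimage_eq_empty_iff ..).2 (by simpa only [SimpleFunc.mem_range] using hs)
  simp only [fiber_empty, measureReal_empty, zero_mul, neg_zero]

lemma entOf_comp_le (a : SimpleFunc Ω α) (g : α → β) : entOf P (g ∘ a) ≤ entOf P a := by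
  rw [← SimpleFunc.coe_map, entOf_eq_integral_surprisal, entOf_eq_integral_surprisal]
  refine integral_mono_ae (integrable_surprisal P _) (integrable_surprisal P a) ?_
  filter_upwards [ae_measureReal_fiber_pos P a] with ω pos
  have fiber_subset : a ⁻¹' {a ω} ⊆ a.map g ⁻¹' {a.map g ω} := fun _ h ↦ congrArg g h
  exact neg_le_neg (logb_le_logb_of_le one_lt_two pos (measureReal_mono fiber_subset))

variable (z : SimpleFunc Ω α) (w : SimpleFunc Ω β) (x : SimpleFunc Ω γ)

lemma sum_condIndepProb_le :
    ∑ u ∈ ((z.pair w).pair x).range, condIndepProb P z w x u ≤ P.real Set.univ := by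
  calc ∑ u ∈ ((z.pair w).pair x).range, condIndepProb P z w x u
      ≤ ∑ u ∈ (z.range ×ˢ w.range) ×ˢ x.range, condIndepProb P z w x u := by
        refine Finset.sum_le_sum_of_subset_of_nonneg ?_ fun u _ _ ↦ condIndepProb_nonneg P z w x u
        intro u hu
        obtain ⟨ω, rfl⟩ := SimpleFunc.mem_range.1 hu
        simp
    _ = ∑ t ∈ x.range, P.real (x ⁻¹' {t}) * P.real (x ⁻¹' {t}) / P.real (x ⁻¹' {t}) := by
        rw [Finset.sum_product_right]
        refine Finset.sum_congr rfl fun t _ ↦ ?_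
        simp only [condIndepProb, ← Finset.sum_div, Finset.sum_product, ← Finset.sum_mul_sum]
        congr 2 <;> exact sum_measureReal_fiber_pair P _ x t
    _ = P.real Set.univ := by simp only [mul_self_div_self, sum_measureReal_fiber]

variable {P z w x} in
lemma measureReal_marginal_fiber_pos {u : (α × β) × γ}
    (pos : 0 < P.real ((z.pair w).pair x ⁻¹' {u})) :
    0 < P.real (z.pair x ⁻¹' {(u.1.1, u.2)}) ∧ 0 < P.real (w.pair x ⁻¹' {(u.1.2, u.2)}) ∧
      0 < P.real (x ⁻¹' {u.2}) := by
  refine ⟨pos.trans_le (measureReal_mono ?_), pos.trans_le (measureReal_mono ?_),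
    pos.trans_le (measureReal_mono ?_)⟩ <;> rintro ω rfl <;> rfl

lemma integral_neg_logb_condIndepProb :
    ∫ ω, -logb 2 (condIndepProb P z w x ((z ω, w ω), x ω)) ∂P =
      entOf P (z.pair x) + entOf P (w.pair x) - entOf P x := by
  have int_zx := integrable_surprisal P (z.pair x)
  have int_wx := integrable_surprisal P (w.pair x)
  simp only [entOf_eq_integral_surprisal]
  rw [← integral_add' int_zx int_wx, ← integral_sub' (int_zx.add int_wx) (integrable_surprisal P x)]
  refine integral_congr_ae ?_
  filter_upwards [ae_measureReal_fiber_pos P ((z.pair w).pair x)] with ω pos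
  obtain ⟨zx_pos, wx_pos, x_pos⟩ := measureReal_marginal_fiber_pos pos
  calc -logb 2 (condIndepProb P z w x ((z ω, w ω), x ω))
      = -(logb 2 (P.real (z.pair x ⁻¹' {(z ω, x ω)})) +
          logb 2 (P.real (w.pair x ⁻¹' {(w ω, x ω)})) - logb 2 (P.real (x ⁻¹' {x ω}))) := by
        congr 1
        exact (logb_div (mul_pos zx_pos wx_pos).ne' x_pos.ne').trans
          (congrArg (· - _) (logb_mul zx_pos.ne' wx_pos.ne'))
    _ = surprisal P (z.pair x) ω + surprisal P (w.pair x) ω - surprisal P x ω := by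
        simp only [surprisal, SimpleFunc.pair_apply]
        ring

end FiniteMeasure

section Probability

variable [IsProbabilityMeasure P]

lemma entOf_le_integral_neg_logb_add (a : SimpleFunc Ω α) {q : α → ℝ} {M : ℝ} (hM : 0 < M)
    (hq : ∀ s, 0 ≤ q s) (hq_pos : ∀ s, 0 < P.real (a ⁻¹' {s}) → 0 < q s)
    (hqM : ∑ s ∈ a.range, q s ≤ M) :
    entOf P a ≤ ∫ ω, -logb 2 (q (a ω)) ∂P + logb 2 M := by
  have excess_nonpos : ((∑ s ∈ a.range, q s) / M - 1) / log 2 ≤ 0 :=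
    div_nonpos_of_nonpos_of_nonneg (sub_nonpos.2 ((div_le_one hM).2 hqM)) (log_pos one_lt_two).le
  rw [entOf_eq_integral_surprisal, integral_surprisal_eq_sum,
    integral_comp_simpleFunc P a fun s ↦ -logb 2 (q s)]
  calc ∑ s ∈ a.range, P.real (a ⁻¹' {s}) * -logb 2 (P.real (a ⁻¹' {s}))
      ≤ ∑ s ∈ a.range, (P.real (a ⁻¹' {s}) * -logb 2 (q s) + P.real (a ⁻¹' {s}) * logb 2 M
          + (q s / M - P.real (a ⁻¹' {s})) / log 2) :=
        Finset.sum_le_sum fun s _ ↦ mul_neg_logb_two_le measureReal_nonneg (hq s) (hq_pos s) hM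
    _ = ∑ s ∈ a.range, P.real (a ⁻¹' {s}) * -logb 2 (q s) + logb 2 M
          + ((∑ s ∈ a.range, q s) / M - 1) / log 2 := by
        rw [Finset.sum_add_distrib, Finset.sum_add_distrib, ← Finset.sum_mul, ← Finset.sum_div,
          Finset.sum_sub_distrib, ← Finset.sum_div, sum_measureReal_fiber, probReal_univ, one_mul]
    _ ≤ ∑ s ∈ a.range, P.real (a ⁻¹' {s}) * -logb 2 (q s) + logb 2 M := by
        linarith only [excess_nonpos]

lemma entOf_pair_le_add_logb (a : SimpleFunc Ω α) (b : SimpleFunc Ω β) {N : ℝ} (hN : 0 < N)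
    (ncard_le : ∀ s, ((b '' (a ⁻¹' {s})).ncard : ℝ) ≤ N) :
    entOf P (a.pair b) ≤ entOf P a + logb 2 N := by
  classical
  have image_fst : (a.pair b).range.image Prod.fst = a.range := by
    ext s
    simp
  have sum_le : ∑ u ∈ (a.pair b).range, P.real (a ⁻¹' {u.1}) ≤ N := by
    calc ∑ u ∈ (a.pair b).range, P.real (a ⁻¹' {u.1})
        = ∑ s ∈ a.range, #{u ∈ (a.pair b).range | u.1 = s} • P.real (a ⁻¹' {s}) := by
          rw [Finset.sum_comp (fun s ↦ P.real (a ⁻¹' {s})) Prod.fst, image_fst]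
      _ ≤ ∑ s ∈ a.range, N * P.real (a ⁻¹' {s}) := by
          simp only [nsmul_eq_mul]
          gcongr with s
          exact (Nat.cast_le.2 (card_filter_range_pair_le_ncard a b s)).trans (ncard_le s)
      _ = N := by rw [← Finset.mul_sum, sum_measureReal_fiber, probReal_univ, mul_one]
  have fiber_subset (u : α × β) : a.pair b ⁻¹' {u} ⊆ a ⁻¹' {u.1} := fun _ h ↦ congrArg Prod.fst h
  rw [entOf_eq_integral_surprisal P a]
  exact entOf_le_integral_neg_logb_add P (a.pair b) (q := fun u ↦ P.real (a ⁻¹' {u.1})) hN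
    (fun _ ↦ measureReal_nonneg) (fun u pos ↦ pos.trans_le (measureReal_mono (fiber_subset u)))
    sum_le

lemma entOf_pair_pair_add_entOf_le (z : SimpleFunc Ω α) (w : SimpleFunc Ω β) (x : SimpleFunc Ω γ) :
    entOf P ((z.pair w).pair x) + entOf P x ≤ entOf P (z.pair x) + entOf P (w.pair x) := by
  have q_pos (u : (α × β) × γ) (pos : 0 < P.real ((z.pair w).pair x ⁻¹' {u})) :
      0 < condIndepProb P z w x u :=
    have ⟨zx_pos, wx_pos, x_pos⟩ := measureReal_marginal_fiber_pos pos
    div_pos (mul_pos zx_pos wx_pos) x_pos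
  have gibbs : entOf P ((z.pair w).pair x) ≤
      ∫ ω, -logb 2 (condIndepProb P z w x ((z ω, w ω), x ω)) ∂P + logb 2 1 :=
    entOf_le_integral_neg_logb_add P ((z.pair w).pair x) one_pos (condIndepProb_nonneg P z w x)
      q_pos ((sum_condIndepProb_le P z w x).trans_eq probReal_univ)
  rw [logb_one, integral_neg_logb_condIndepProb] at gibbs
  linarith

lemma entOf_add_entOf_le_of_entOf_pair_le {δ : Type*} {x : SimpleFunc Ω α} {y : SimpleFunc Ω β}
    {z : SimpleFunc Ω γ} {w : SimpleFunc Ω δ} {c₁ c₂ c₃ : ℝ}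
    (hzx : entOf P (z.pair x) ≤ entOf P z + c₁)
    (hwx : entOf P (w.pair x) ≤ entOf P w + c₂)
    (hzwy : entOf P ((z.pair w).pair y) ≤ entOf P (z.pair w) + c₃) :
    entOf P x + entOf P y ≤ entOf P z + entOf P w + (c₁ + c₂ + c₃) := by
  have submodular := entOf_pair_pair_add_entOf_le P z w x
  have zw_le : entOf P (z.pair w) ≤ entOf P ((z.pair w).pair x) :=
    entOf_comp_le P ((z.pair w).pair x) Prod.fst
  have y_le : entOf P y ≤ entOf P ((z.pair w).pair y) :=
    entOf_comp_le P ((z.pair w).pair y) Prod.snd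
  linarith

end Probability

end Entropy

section Discretization

variable {d : ℕ}

/-- `D_n` on `ℝ^d`, applied componentwise. -/
noncomputable def DnV (n : ℕ) (x : EuclideanSpace ℝ (Fin d)) : Fin d → ℝ := fun i ↦ Dn n (x i)

lemma abs_sub_lt_of_Dn_eq {n : ℕ} {s t : ℝ} (h : Dn n s = Dn n t) :
    |s - t| < 1 / 2 ^ n := by
  have floor_eq : ⌊(2 : ℝ) ^ n * s⌋ = ⌊(2 : ℝ) ^ n * t⌋ := by
    simpa [Dn, div_left_inj'] using h
  have scaled := Int.abs_sub_lt_one_of_floor_eq_floor floor_eq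
  rw [← mul_sub, abs_mul, abs_of_pos (by positivity)] at scaled
  rwa [lt_div_iff₀' (by positivity)]

lemma dist_le_of_DnV_eq {n : ℕ} {x y : EuclideanSpace ℝ (Fin d)} (h : DnV n x = DnV n y) :
    dist x y ≤ √d / 2 ^ n := by
  have coord_le (i : Fin d) : dist (x i) (y i) ≤ 1 / 2 ^ n :=
    (abs_sub_lt_of_Dn_eq (congrFun h i)).le
  calc dist x y = √(∑ i, dist (x i) (y i) ^ 2) := EuclideanSpace.dist_eq x y
    _ ≤ √(∑ _i : Fin d, (1 / 2 ^ n) ^ 2) := by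
        gcongr with i
        exact coord_le i
    _ = √d / 2 ^ n := by simp [Real.sqrt_sq, div_eq_mul_inv]

lemma abs_floor_sub_floor_le_ceil {s t R : ℝ} (h : |s - t| ≤ R) : |⌊s⌋ - ⌊t⌋| ≤ ⌈R⌉ := by
  obtain ⟨lower, upper⟩ := abs_le.1 h
  rw [← Int.lt_add_one_iff, abs_lt]
  rify
  have := Int.le_ceil R
  have := Int.floor_le s
  have := Int.floor_le t
  have := Int.lt_floor_add_one s
  have := Int.lt_floor_add_one t
  constructor <;> linarith

lemma DnV_image_closedBall_subset (n : ℕ) (b : EuclideanSpace ℝ (Fin d)) (R : ℝ) :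
    DnV n '' Metric.closedBall b (R / 2 ^ n) ⊆
      (fun k : Fin d → ℤ ↦ fun i ↦ (k i : ℝ) / 2 ^ n) ''
        Set.Icc (fun i ↦ ⌊2 ^ n * b i⌋ - ⌈R⌉) (fun i ↦ ⌊2 ^ n * b i⌋ + ⌈R⌉) := by
  rintro _ ⟨x, hx, rfl⟩
  have floor_close (i : Fin d) : |⌊2 ^ n * x i⌋ - ⌊2 ^ n * b i⌋| ≤ ⌈R⌉ := by
    refine abs_floor_sub_floor_le_ceil ?_
    have coord_le : |x i - b i| ≤ R / 2 ^ n :=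
      (PiLp.norm_apply_le (x - b) i).trans (mem_closedBall_iff_norm.1 hx)
    rwa [← mul_sub, abs_mul, abs_of_pos (by positivity), ← le_div_iff₀' (by positivity)]
  exact ⟨fun i ↦ ⌊2 ^ n * x i⌋, ⟨fun i ↦ by linarith [abs_le.1 (floor_close i)],
    fun i ↦ by linarith [abs_le.1 (floor_close i)]⟩, rfl⟩

lemma finite_DnV_image {s : Set (EuclideanSpace ℝ (Fin d))} (hs : Bornology.IsBounded s) (n : ℕ) :
    (DnV n '' s).Finite := by
  obtain ⟨r, hr⟩ := hs.subset_closedBall 0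
  have hr' : s ⊆ Metric.closedBall 0 (r * 2 ^ n / 2 ^ n) := by
    rwa [mul_div_cancel_right₀ _ (by positivity)]
  exact ((Set.finite_Icc _ _).image _).subset
    ((Set.image_mono hr').trans (DnV_image_closedBall_subset n 0 (r * 2 ^ n)))

lemma ncard_DnV_image_closedBall_le (n : ℕ) (b : EuclideanSpace ℝ (Fin d)) {R : ℝ} (hR : 0 ≤ R) :
    ((DnV n '' Metric.closedBall b (R / 2 ^ n)).ncard : ℝ) ≤ (2 * R + 3) ^ d := by
  have card_box : (Set.Icc (fun i : Fin d ↦ ⌊2 ^ n * b i⌋ - ⌈R⌉)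
      (fun i ↦ ⌊2 ^ n * b i⌋ + ⌈R⌉)).ncard = (2 * ⌈R⌉ + 1).toNat ^ d := by
    rw [← Finset.coe_Icc, Set.ncard_coe_finset, Pi.card_Icc]
    have card_side (k : ℤ) : (Finset.Icc (k - ⌈R⌉) (k + ⌈R⌉)).card = (2 * ⌈R⌉ + 1).toNat := by
      rw [Int.card_Icc]
      congr 1
      ring
    simp only [card_side, Finset.prod_const, Finset.card_univ, Fintype.card_fin]
  calc ((DnV n '' Metric.closedBall b (R / 2 ^ n)).ncard : ℝ)
      ≤ ((2 * ⌈R⌉ + 1).toNat ^ d : ℕ) := by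
        rw [← card_box, Nat.cast_le]
        exact (Set.ncard_le_ncard (DnV_image_closedBall_subset n b R)
          ((Set.finite_Icc _ _).image _)).trans (Set.ncard_image_le (Set.finite_Icc _ _))
    _ = (2 * (⌈R⌉ : ℝ) + 1) ^ d := by
        have : 0 ≤ 2 * ⌈R⌉ + 1 := by positivity
        rw [Nat.cast_pow, ← Int.cast_natCast, Int.toNat_of_nonneg this]
        push_cast
        rfl
    _ ≤ (2 * R + 3) ^ d := by
        gcongr ?_ ^ d
        linarith [Int.ceil_lt_add_one R]

lemma measurable_Dn (n : ℕ) : Measurable (Dn n) := by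
  unfold Dn
  fun_prop

variable {Ω α : Type*} [MeasurableSpace Ω]

/-- `D_n(X)` for a bounded random vector `X`, as a random variable with finitely many values. -/
noncomputable def discretize (n : ℕ) (X : Ω → EuclideanSpace ℝ (Fin d)) (hX : Measurable X)
    (bX : Bornology.IsBounded (Set.range X)) : SimpleFunc Ω (Fin d → ℝ) where
  toFun ω := DnV n (X ω)
  measurableSet_fiber' v := by
    have : Measurable fun ω ↦ DnV n (X ω) :=
      measurable_pi_lambda _ fun i ↦ (measurable_Dn n).comp (by fun_prop)
    exact this (measurableSet_singleton v)
  finite_range' := (finite_DnV_image bX n).subset (by rintro _ ⟨ω, rfl⟩; exact ⟨X ω, ⟨ω, rfl⟩, rfl⟩)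

lemma entOf_pair_discretize_le (P : Measure Ω) [IsProbabilityMeasure P] (a : SimpleFunc Ω α)
    (n : ℕ) {X : Ω → EuclideanSpace ℝ (Fin d)} (hX : Measurable X)
    (bX : Bornology.IsBounded (Set.range X)) {R : ℝ} (hR : 0 ≤ R)
    (hdist : ∀ ω ω', a ω = a ω' → dist (X ω) (X ω') ≤ R / 2 ^ n) :
    entOf P (a.pair (discretize n X hX bX)) ≤ entOf P a + d * logb 2 (2 * R + 3) := by
  rw [← logb_pow]
  refine entOf_pair_le_add_logb P a _ (by positivity) fun s ↦ ?_
  rcases (a ⁻¹' {s}).eq_empty_or_nonempty with empty | ⟨ω₀, hω₀⟩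
  · simp only [empty, Set.image_empty, Set.ncard_empty, CharP.cast_eq_zero]
    positivity
  have image_subset : discretize n X hX bX '' (a ⁻¹' {s}) ⊆
      DnV n '' Metric.closedBall (X ω₀) (R / 2 ^ n) := by
    rintro _ ⟨ω, hω, rfl⟩
    exact ⟨X ω, hdist ω ω₀ (hω.trans hω₀.symm), rfl⟩
  refine le_trans ?_ (ncard_DnV_image_closedBall_le n (X ω₀) hR)
  exact_mod_cast Set.ncard_le_ncard image_subset (finite_DnV_image Metric.isBounded_closedBall n)

lemma logb_two_mul_mul_add_three_le {κ e : ℝ} (hκ : 2 ≤ κ) (he : 0 ≤ e) :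
    logb 2 (2 * (κ * e) + 3) ≤ (logb 2 (2 * e + 3) + 1) * logb 2 κ := by
  have one_le_logb : 1 ≤ logb 2 κ := by
    rwa [le_logb_iff_rpow_le one_lt_two (by linarith), rpow_one]
  have logb_nonneg : 0 ≤ logb 2 (2 * e + 3) := logb_nonneg one_lt_two (by linarith)
  calc logb 2 (2 * (κ * e) + 3) ≤ logb 2 ((2 * e + 3) * κ) :=
        logb_le_logb_of_le one_lt_two (by positivity) (by linarith)
    _ = logb 2 (2 * e + 3) + logb 2 κ := logb_mul (by positivity) (by positivity)
    _ ≤ (logb 2 (2 * e + 3) + 1) * logb 2 κ := by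
        linarith [le_mul_of_one_le_right logb_nonneg one_le_logb]

lemma entOf_pair_discretize_le_of_lipOn {E : Type*} [PseudoMetricSpace E] (P : Measure Ω)
    [IsProbabilityMeasure P] (a : SimpleFunc Ω α) {n : ℕ} {X : Ω → EuclideanSpace ℝ (Fin d)}
    (hX : Measurable X) (bX : Bornology.IsBounded (Set.range X)) {U : Ω → E}
    {f : E → EuclideanSpace ℝ (Fin d)} {κ e : ℝ} (hκ : 2 ≤ κ) (he : 0 ≤ e)
    (hf : LipOn f (Set.range U) κ) (hXf : ∀ ω, X ω = f (U ω))
    (hU : ∀ ω ω', a ω = a ω' → dist (U ω) (U ω') ≤ e / 2 ^ n) :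
    entOf P (a.pair (discretize n X hX bX)) ≤
      entOf P a + d * ((logb 2 (2 * e + 3) + 1) * logb 2 κ) := by
  have hdist (ω ω' : Ω) (h : a ω = a ω') : dist (X ω) (X ω') ≤ κ * e / 2 ^ n := by
    calc dist (X ω) (X ω') = dist (f (U ω)) (f (U ω')) := by rw [hXf, hXf]
      _ ≤ κ * dist (U ω) (U ω') := hf _ ⟨ω, rfl⟩ _ ⟨ω', rfl⟩
      _ ≤ κ * (e / 2 ^ n) := by
          gcongr
          exact hU ω ω' h
      _ = κ * e / 2 ^ n := (mul_div_assoc ..).symm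
  refine (entOf_pair_discretize_le P a n hX bX (by positivity) hdist).trans ?_
  gcongr
  exact logb_two_mul_mul_add_three_le hκ he

end Discretization

/-- Discretized submodularity: for all dimensions `d₁, d₂, d₃, d₄` there is a constant
`A > 0` (depending only on the dimensions) such that for all `κ ≥ 2`, all bounded random
variables `X, Y, Z, W` with values in `ℝ^{d₁}, ℝ^{d₂}, ℝ^{d₃}, ℝ^{d₄}` and all κ-Lipschitz
`f, g, h` with `X = f(Z)`, `X = g(W)` and `Y = h(Z,W)`, one has
`Hₙ(X) + Hₙ(Y) ≤ Hₙ(Z) + Hₙ(W) + A log κ` for all `n`. -/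
theorem discretized_submodularity (d₁ d₂ d₃ d₄ : ℕ) :
    ∃ A : ℝ, 0 < A ∧
      ∀ κ : ℝ, 2 ≤ κ →
        ∀ (Ω : Type) (mΩ : MeasurableSpace Ω) (P : Measure Ω),
          IsProbabilityMeasure P →
          ∀ (X : Ω → EuclideanSpace ℝ (Fin d₁)) (Y : Ω → EuclideanSpace ℝ (Fin d₂))
            (Z : Ω → EuclideanSpace ℝ (Fin d₃)) (W : Ω → EuclideanSpace ℝ (Fin d₄)),
            Measurable X → Measurable Y → Measurable Z → Measurable W →
            Bornology.IsBounded (Set.range X) → Bornology.IsBounded (Set.range Y) →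
            Bornology.IsBounded (Set.range Z) → Bornology.IsBounded (Set.range W) →
            ∀ f : EuclideanSpace ℝ (Fin d₃) → EuclideanSpace ℝ (Fin d₁),
              LipOn f (Set.range Z) κ → (∀ ω, X ω = f (Z ω)) →
              ∀ g : EuclideanSpace ℝ (Fin d₄) → EuclideanSpace ℝ (Fin d₁),
                LipOn g (Set.range W) κ → (∀ ω, X ω = g (W ω)) →
                ∀ h : EuclideanSpace ℝ (Fin d₃) × EuclideanSpace ℝ (Fin d₄) →
                    EuclideanSpace ℝ (Fin d₂),
                  LipOn h (Set.range (fun ω => (Z ω, W ω))) κ →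
                  (∀ ω, Y ω = h (Z ω, W ω)) →
                  ∀ n : ℕ,
                    HnV P n X + HnV P n Y ≤ HnV P n Z + HnV P n W + A * Real.logb 2 κ := by
  let e := max √d₃ √d₄
  let C := logb 2 (2 * e + 3) + 1
  have he : 0 ≤ e := le_max_of_le_left (sqrt_nonneg _)
  have hC : 0 < C := add_pos_of_nonneg_of_pos (logb_nonneg one_lt_two (by linarith)) one_pos
  refine ⟨(2 * d₁ + d₂) * C + 1, by positivity, ?_⟩
  intro κ hκ Ω _ P _ X Y Z W mX mY mZ mW bX bY bZ bW f hf hXf g hg hXg h hh hYh n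
  let x := discretize n X mX bX
  let y := discretize n Y mY bY
  let z := discretize n Z mZ bZ
  let w := discretize n W mW bW
  have hz (ω ω') (h : z ω = z ω') : dist (Z ω) (Z ω') ≤ e / 2 ^ n :=
    (dist_le_of_DnV_eq h).trans (by gcongr; exact le_max_left _ _)
  have hw (ω ω') (h : w ω = w ω') : dist (W ω) (W ω') ≤ e / 2 ^ n :=
    (dist_le_of_DnV_eq h).trans (by gcongr; exact le_max_right _ _)
  have hzw (ω ω') (h : z.pair w ω = z.pair w ω') : dist (Z ω, W ω) (Z ω', W ω') ≤ e / 2 ^ n :=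
    max_le (hz ω ω' (congrArg Prod.fst h)) (hw ω ω' (congrArg Prod.snd h))
  have bound : entOf P x + entOf P y ≤ entOf P z + entOf P w +
      (d₁ * (C * logb 2 κ) + d₁ * (C * logb 2 κ) + d₂ * (C * logb 2 κ)) :=
    entOf_add_entOf_le_of_entOf_pair_le P
      (entOf_pair_discretize_le_of_lipOn P z mX bX hκ he hf hXf hz)
      (entOf_pair_discretize_le_of_lipOn P w mX bX hκ he hg hXg hw)
      (entOf_pair_discretize_le_of_lipOn P (z.pair w) mY bY hκ he hh hYh hzw)
  change entOf P x + entOf P y ≤ entOf P z + entOf P w + _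
  linarith [logb_nonneg one_lt_two (show 1 ≤ κ by linarith)]
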